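/- Let m be a positive integer, r ≥ 1 and p_k, q_k, s_k ∈ [1,∞) for k = 1,…,m, with q_k ≥ p_k for each k and 1/r − ∑_{k=1}^m 1/p_k + ∑_{k=1}^m 1/q_k > 0, where 1/s_k = 1/r − ∑_{i=k}^m 1/p_i + ∑_{i=k}^m 1/q_i for each k. Then every multiple (r; p₁,…,p_m)-summing m-linear operator T : X₁ × ⋯ × X_m → Y between Banach spaces is multiple ((s₁,…,s_m); q₁,…,q_m)-summing, and the inclusion has norm 1 (the same constant C works). -/

import Mathlib

open scoped BigOperators

/-- The weak ℓ^p norm of a finite family in a normed space: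
`sup_{φ ∈ B_{X'}} (∑ j |φ(x_j)|^p)^(1/p)`. -/
noncomputable def weakNorm {X : Type*} [NormedAddCommGroup X] [NormedSpace ℝ X]
    {n : ℕ} (x : Fin n → X) (p : ℝ) : ℝ :=
  ⨆ φ : {φ : X →L[ℝ] ℝ // ‖φ‖ ≤ 1}, (∑ j, |φ.1 (x j)| ^ p) ^ (1 / p)

/-- The anisotropic mixed-norm of a multi-indexed family of reals with
exponents `s = (s 0, …, s (m-1))`:
`(∑_{j₁} ( ⋯ (∑_{j_m} a^{s_m})^{s_{m-1}/s_m} ⋯ )^{s₁/s₂})^{1/s₁}`. -/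
noncomputable def anorm : (m : ℕ) → (n : Fin m → ℕ) → (s : Fin m → ℝ) →
    ((∀ k, Fin (n k)) → ℝ) → ℝ
  | 0, _, _, a => a finZeroElim
  | m + 1, n, s, a =>
      (∑ j : Fin (n 0), (anorm m (fun k => n k.succ) (fun k => s k.succ)
          fun js => a (Fin.cons j js)) ^ s 0) ^ (1 / s 0)

theorem anorm_nonneg : ∀ (m : ℕ) (n : Fin m → ℕ) (s : Fin m → ℝ)
    (a : (∀ k, Fin (n k)) → ℝ) (_ : ∀ j, 0 ≤ a j), 0 ≤ anorm m n s a := by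
  intro m
  induction m with
  | zero => intro n s a ha; exact ha _
  | succ m ih =>
    intro n s a ha
    unfold anorm
    exact Real.rpow_nonneg (Finset.sum_nonneg fun j _ =>
      Real.rpow_nonneg (ih _ _ _ fun js => ha _) _) _

/-- The mixed norm is attained, up to inequality, by product weights. -/
theorem exists_weights (r : ℝ) (hr : 1 ≤ r) : ∀ (m : ℕ) (n : Fin m → ℕ) (s τ : Fin m → ℝ)
    (a : (∀ k, Fin (n k)) → ℝ) (_ : ∀ j, 0 ≤ a j) (_ : ∀ k, 0 ≤ τ k) (_ : ∀ k, 0 < s k)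
    (_ : ∀ k, 1 / s k = 1 / r - ∑ i, if k ≤ i then τ i else 0),
    ∃ b : ∀ k, Fin (n k) → ℝ, (∀ k j, 0 ≤ b k j) ∧ (∀ k, ∑ j, b k j ≤ 1) ∧
      anorm m n s a ^ r ≤ ∑ j : ∀ k, Fin (n k), (a j * ∏ k, b k (j k) ^ τ k) ^ r := by
  have hr0 : 0 < r := by linarith
  intro m
  induction m with
  | zero =>
    intro n s τ a ha _ _ _
    refine ⟨fun k => k.elim0, fun k => k.elim0, fun k => k.elim0, ?_⟩
    rw [Fintype.sum_unique]
    simp only [anorm, Finset.univ_eq_empty, Finset.prod_empty, mul_one]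
    apply le_of_eq
    congr 2
  | succ m ih =>
    intro n s τ a ha hτ hs0 hs
    have hs' : ∀ k : Fin m, 1 / s k.succ = 1 / r - ∑ i : Fin m, if k ≤ i then τ i.succ else 0 := by
      intro k
      rw [hs k.succ, Fin.sum_univ_succ]
      simp
    choose b hb0 hb1 hb using fun j : Fin (n 0) =>
      ih (fun k => n k.succ) (fun k => s k.succ) (fun k => τ k.succ)
        (fun js => a (Fin.cons j js)) (fun js => ha _) (fun k => hτ _) (fun k => hs0 _) hs'
    have hN0 : ∀ j, 0 ≤ anorm m (fun k => n k.succ) (fun k => s k.succ)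
        (fun js => a (Fin.cons j js)) := fun j => anorm_nonneg _ _ _ _ fun js => ha _
    have hdef : anorm (m+1) n s a = (∑ j : Fin (n 0), (anorm m (fun k => n k.succ)
      (fun k => s k.succ) fun js => a (Fin.cons j js)) ^ s 0) ^ (1 / s 0) := rfl
    rw [hdef]
    set N : Fin (n 0) → ℝ := fun j => anorm m (fun k => n k.succ) (fun k => s k.succ)
        (fun js => a (Fin.cons j js)) with hN
    change ∀ j, 0 ≤ N j at hN0
    change ∀ j, N j ^ r ≤ _ at hb
    change ∃ b : ∀ k, Fin (n k) → ℝ, _ ∧ _ ∧ ((∑ j, N j ^ s 0) ^ (1 / s 0)) ^ r ≤ _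
    clear_value N
    have hS0 : 0 ≤ ∑ j, N j ^ s 0 := Finset.sum_nonneg fun j _ => Real.rpow_nonneg (hN0 j) _
    rcases hS0.eq_or_lt with hS | hS
    · refine ⟨fun _ _ => 0, fun _ _ => le_rfl, fun _ => by simp, ?_⟩
      rw [← hS, Real.zero_rpow (one_div_pos.2 (hs0 0)).ne', Real.zero_rpow hr0.ne']
      exact Finset.sum_nonneg fun j _ => Real.rpow_nonneg (mul_nonneg (ha _)
        (Finset.prod_nonneg fun k _ => Real.rpow_nonneg le_rfl _)) _
    set S := ∑ j, N j ^ s 0 with hSdef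
    set l : Fin (n 0) → ℝ := fun j => N j ^ s 0 / S with hl
    have hl0 : ∀ j, 0 ≤ l j := fun j => div_nonneg (Real.rpow_nonneg (hN0 j) _) hS0
    have hl1 : ∑ j, l j = 1 := by
      rw [hl, ← Finset.sum_div, ← hSdef, div_self hS.ne']
    let B : ∀ k, Fin (n k) → ℝ := Fin.cons (α := fun k => Fin (n k) → ℝ) l
      (fun k i => ∑ j, l j * b j k i)
    have hB0 : B 0 = l := rfl
    have hBs : ∀ k : Fin m, B k.succ = fun i => ∑ j, l j * b j k i := fun k => rfl
    refine ⟨B, ?_, ?_, ?_⟩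
    · intro k
      refine Fin.cases ?_ (fun k => ?_) k
      · exact hl0
      · intro i
        rw [hBs]
        exact Finset.sum_nonneg fun j _ => mul_nonneg (hl0 j) (hb0 _ _ _)
    · intro k
      refine Fin.cases ?_ (fun k => ?_) k
      · exact hl1.le
      · rw [hBs, Finset.sum_comm, ← hl1]
        refine Finset.sum_le_sum fun j _ => ?_
        rw [← Finset.mul_sum]
        exact mul_le_of_le_one_right (hl0 j) (hb1 j k)
    · have hsum : τ 0 + ∑ k : Fin m, τ k.succ = 1 / r - 1 / s 0 := by
        rw [hs 0, Fin.sum_univ_succ]; simp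
      have hT0 : 0 ≤ τ 0 + ∑ k : Fin m, τ k.succ :=
        add_nonneg (hτ _) (Finset.sum_nonneg fun k _ => hτ _)
      have key : ∀ j, (l j ^ (τ 0 + ∑ k : Fin m, τ k.succ) * N j) ^ r ≤
          ∑ js : ∀ k : Fin m, Fin (n k.succ), (a (Fin.cons j js) *
            (l j ^ τ 0 * ∏ k, B k.succ (js k) ^ τ k.succ)) ^ r := by
        intro j
        have hlT : 0 ≤ l j ^ (τ 0 + ∑ k : Fin m, τ k.succ) := Real.rpow_nonneg (hl0 j) _
        rw [Real.mul_rpow hlT (hN0 j)]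
        refine (mul_le_mul_of_nonneg_left (hb j) (Real.rpow_nonneg hlT _)).trans ?_
        rw [Finset.mul_sum]
        refine Finset.sum_le_sum fun js _ => ?_
        have hP : 0 ≤ ∏ k, b j k (js k) ^ τ k.succ :=
          Finset.prod_nonneg fun k _ => Real.rpow_nonneg (hb0 _ _ _) _
        rw [← Real.mul_rpow hlT (mul_nonneg (ha _) hP)]
        refine Real.rpow_le_rpow (mul_nonneg hlT (mul_nonneg (ha _) hP)) ?_ hr0.le
        rw [mul_left_comm]
        refine mul_le_mul_of_nonneg_left ?_ (ha _)
        rw [Real.rpow_add_of_nonneg (hl0 j) (hτ 0) (Finset.sum_nonneg fun k _ => hτ _), mul_assoc]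
        refine mul_le_mul_of_nonneg_left ?_ (Real.rpow_nonneg (hl0 j) _)
        rw [Real.rpow_sum_of_nonneg (hl0 j) (fun k _ => hτ _), ← Finset.prod_mul_distrib]
        refine Finset.prod_le_prod (fun k _ => mul_nonneg (Real.rpow_nonneg (hl0 j) _)
          (Real.rpow_nonneg (hb0 _ _ _) _)) fun k _ => ?_
        rw [← Real.mul_rpow (hl0 j) (hb0 _ _ _)]
        refine Real.rpow_le_rpow (mul_nonneg (hl0 j) (hb0 _ _ _)) ?_ (hτ _)
        rw [hBs]
        exact Finset.single_le_sum (f := fun j => l j * b j k (js k))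
          (fun j _ => mul_nonneg (hl0 j) (hb0 _ _ _)) (Finset.mem_univ j)
      have hR : ∑ j : ∀ k, Fin (n k), (a j * ∏ k, B k (j k) ^ τ k) ^ r =
          ∑ j : Fin (n 0), ∑ js : ∀ k : Fin m, Fin (n k.succ), (a (Fin.cons j js) *
            (l j ^ τ 0 * ∏ k, B k.succ (js k) ^ τ k.succ)) ^ r := by
        rw [← (Fin.consEquiv (fun k => Fin (n k))).sum_comp, Fintype.sum_prod_type]
        refine Finset.sum_congr rfl fun j _ => Finset.sum_congr rfl fun js _ => ?_
        rw [Fin.prod_univ_succ]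
        rfl
      rw [hR]
      refine le_trans (le_of_eq ?_) (Finset.sum_le_sum fun j _ => key j)
      have h1 : ∀ j, (l j ^ (τ 0 + ∑ k : Fin m, τ k.succ) * N j) ^ r =
          N j ^ s 0 / S ^ (1 - r / s 0) := by
        intro j
        have hs00 := hs0 0
        have he : (τ 0 + ∑ k : Fin m, τ k.succ) * r = 1 - r / s 0 := by
          rw [hsum]; field_simp
        have he0 : 0 ≤ 1 - r / s 0 := by rw [← he]; positivity
        rw [Real.mul_rpow (Real.rpow_nonneg (hl0 j) _) (hN0 j), ← Real.rpow_mul (hl0 j), he, hl,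
          Real.div_rpow (Real.rpow_nonneg (hN0 j) _) hS0, ← Real.rpow_mul (hN0 j),
          div_mul_eq_mul_div, ← Real.rpow_add_of_nonneg (hN0 j) (by positivity) hr0.le]
        congr 2
        field_simp
        ring
      rw [Finset.sum_congr rfl fun j _ => h1 j, ← Finset.sum_div, ← hSdef, ← Real.rpow_mul hS0]
      nth_rewrite 2 [← Real.rpow_one S]
      rw [← Real.rpow_sub hS]
      congr 1
      ring

theorem weakNorm_bdd {X : Type*} [NormedAddCommGroup X] [NormedSpace ℝ X]
    {n : ℕ} (x : Fin n → X) (p : ℝ) (hp : 1 ≤ p) :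
    BddAbove (Set.range fun φ : {φ : X →L[ℝ] ℝ // ‖φ‖ ≤ 1} =>
      (∑ j, |φ.1 (x j)| ^ p) ^ (1 / p)) := by
  refine ⟨(∑ j, ‖x j‖ ^ p) ^ (1 / p), ?_⟩
  rintro _ ⟨φ, rfl⟩
  refine Real.rpow_le_rpow (Finset.sum_nonneg fun j _ => Real.rpow_nonneg (abs_nonneg _) _)
    (Finset.sum_le_sum fun j _ => Real.rpow_le_rpow (abs_nonneg _) ?_ (by linarith))
    (by positivity)
  have := φ.1.le_of_opNorm_le φ.2 (x j)
  simpa using this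

theorem weakNorm_nonneg {X : Type*} [NormedAddCommGroup X] [NormedSpace ℝ X]
    {n : ℕ} (x : Fin n → X) (p : ℝ) : 0 ≤ weakNorm x p :=
  Real.iSup_nonneg fun φ => Real.rpow_nonneg
    (Finset.sum_nonneg fun j _ => Real.rpow_nonneg (abs_nonneg _) _) _

theorem weighted_le {n : ℕ} (b u : Fin n → ℝ) (p q : ℝ) (hp : 1 ≤ p) (hpq : p ≤ q)
    (hb0 : ∀ j, 0 ≤ b j) (hb1 : ∑ j, b j ≤ 1) (hu : ∀ j, 0 ≤ u j) :
    (∑ j, (b j ^ (1 / p - 1 / q) * u j) ^ p) ^ (1 / p) ≤ (∑ j, u j ^ q) ^ (1 / q) := by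
  have hp0 : 0 < p := by linarith
  have hq0 : 0 < q := by linarith
  rcases hpq.eq_or_lt with rfl | hlt
  · simp
  have hconj : Real.HolderConjugate (q / (q - p)) (q / p) := by
    have : 0 < q - p := by linarith
    rw [Real.holderConjugate_iff]
    refine ⟨by rw [lt_div_iff₀ this]; linarith, ?_⟩
    field_simp
    ring
  have hqp : 0 < q - p := by linarith
  have h := Real.inner_le_Lp_mul_Lq_of_nonneg Finset.univ hconj
    (f := fun j => b j ^ ((q - p) / q)) (g := fun j => u j ^ p)
    (fun j _ => Real.rpow_nonneg (hb0 j) _) (fun j _ => Real.rpow_nonneg (hu j) _)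
  have e1 : ∀ j, (b j ^ (1 / p - 1 / q) * u j) ^ p = b j ^ ((q - p) / q) * u j ^ p := by
    intro j
    rw [Real.mul_rpow (Real.rpow_nonneg (hb0 j) _) (hu j), ← Real.rpow_mul (hb0 j)]
    congr 2
    field_simp
  have e2 : ∀ j, (b j ^ ((q - p) / q)) ^ (q / (q - p)) = b j := by
    intro j
    rw [← Real.rpow_mul (hb0 j)]
    have : (q - p) / q * (q / (q - p)) = 1 := by field_simp
    rw [this, Real.rpow_one]
  have e3 : ∀ j, (u j ^ p) ^ (q / p) = u j ^ q := by
    intro j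
    rw [← Real.rpow_mul (hu j)]
    congr 1
    field_simp
  simp only [e2, e3] at h
  simp only [e1]
  have hU : 0 ≤ ∑ j, u j ^ q := Finset.sum_nonneg fun j _ => Real.rpow_nonneg (hu j) _
  have h2 : ∑ j, b j ^ ((q - p) / q) * u j ^ p ≤ (∑ j, u j ^ q) ^ (1 / (q / p)) :=
    h.trans (mul_le_of_le_one_left (Real.rpow_nonneg hU _)
      (Real.rpow_le_one (Finset.sum_nonneg fun j _ => hb0 j) hb1 (by positivity)))
  refine (Real.rpow_le_rpow (Finset.sum_nonneg fun j _ => mul_nonneg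
    (Real.rpow_nonneg (hb0 j) _) (Real.rpow_nonneg (hu j) _)) h2 (by positivity)).trans ?_
  rw [← Real.rpow_mul hU]
  apply le_of_eq
  congr 1
  field_simp

theorem weakNorm_weighted {X : Type*} [NormedAddCommGroup X] [NormedSpace ℝ X]
    {n : ℕ} (x : Fin n → X) (b : Fin n → ℝ) (p q : ℝ) (hp : 1 ≤ p) (hpq : p ≤ q)
    (hb0 : ∀ j, 0 ≤ b j) (hb1 : ∑ j, b j ≤ 1) :
    weakNorm (fun j => b j ^ (1 / p - 1 / q) • x j) p ≤ weakNorm x q := by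
  unfold weakNorm
  haveI : Nonempty {φ : X →L[ℝ] ℝ // ‖φ‖ ≤ 1} := ⟨⟨0, by simp⟩⟩
  refine ciSup_le fun φ => ?_
  refine le_trans ?_ (le_ciSup (weakNorm_bdd x q (hp.trans hpq)) φ)
  refine le_trans (le_of_eq ?_)
    (weighted_le b (fun j => |φ.1 (x j)|) p q hp hpq hb0 hb1 fun j => abs_nonneg _)
  simp only [map_smul, smul_eq_mul, abs_mul, abs_of_nonneg (Real.rpow_nonneg (hb0 _) _)]

/-- **The new anisotropic inclusion theorem (Theorem 1.3 of the paper).**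
If `T` is multiple `(r; p₁,…,p_m)`-summing with constant `C`, `q_k ≥ p_k`,
`1/r − ∑ 1/p_k + ∑ 1/q_k > 0` and `1/s_k = 1/r − ∑_{i≥k} 1/p_i + ∑_{i≥k} 1/q_i`,
then `T` is multiple `((s₁,…,s_m); q₁,…,q_m)`-summing with the same constant `C`
(so the inclusion operator has norm 1). -/
theorem anisotropic_inclusion_theorem
    (m : ℕ) (hm : 0 < m)
    {X : Fin m → Type*} [∀ k, NormedAddCommGroup (X k)] [∀ k, NormedSpace ℝ (X k)]
    [∀ k, CompleteSpace (X k)]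
    {Y : Type*} [NormedAddCommGroup Y] [NormedSpace ℝ Y] [CompleteSpace Y]
    (T : ContinuousMultilinearMap ℝ X Y)
    (r : ℝ) (p q s : Fin m → ℝ) (hr : 1 ≤ r)
    (hp : ∀ k, 1 ≤ p k) (hpq : ∀ k, p k ≤ q k)
    (hpos : 0 < 1 / r - ∑ k, 1 / p k + ∑ k, 1 / q k)
    (hs : ∀ k, 1 / s k =
      1 / r - (∑ i, if k ≤ i then 1 / p i else 0) + ∑ i, if k ≤ i then 1 / q i else 0)
    (C : ℝ) (hC : 0 ≤ C)
    (hT : ∀ (n : Fin m → ℕ) (x : ∀ k, Fin (n k) → X k),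
      (∑ j : ∀ k, Fin (n k), ‖T (fun k => x k (j k))‖ ^ r) ^ (1 / r) ≤
        C * ∏ k, weakNorm (x k) (p k)) :
    ∀ (n : Fin m → ℕ) (x : ∀ k, Fin (n k) → X k),
      anorm m n s (fun j => ‖T (fun k => x k (j k))‖) ≤
        C * ∏ k, weakNorm (x k) (q k) := by
  intro n x
  have hr0 : 0 < r := by linarith
  have hτ : ∀ k, 0 ≤ 1 / p k - 1 / q k := fun k =>
    sub_nonneg.2 (one_div_le_one_div_of_le (by linarith [hp k]) (hpq k))
  have hs' : ∀ k, 1 / s k = 1 / r - ∑ i, if k ≤ i then 1 / p i - 1 / q i else 0 := by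
    intro k
    rw [hs k, sub_add, ← Finset.sum_sub_distrib]
    congr 1
    refine Finset.sum_congr rfl fun i _ => ?_
    split_ifs <;> simp
  have hs0 : ∀ k, 0 < s k := by
    intro k
    rw [← one_div_pos, hs' k]
    have : (∑ i, if k ≤ i then 1 / p i - 1 / q i else 0) ≤ ∑ i, (1 / p i - 1 / q i) := by
      refine Finset.sum_le_sum fun i _ => ?_
      split_ifs
      · exact le_rfl
      · exact hτ i
    rw [Finset.sum_sub_distrib] at this
    linarith
  obtain ⟨b, hb0, hb1, hb⟩ := exists_weights r hr m n s (fun k => 1 / p k - 1 / q k)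
    (fun j => ‖T (fun k => x k (j k))‖) (fun j => norm_nonneg _) hτ hs0 hs'
  have hA : 0 ≤ anorm m n s (fun j => ‖T (fun k => x k (j k))‖) :=
    anorm_nonneg _ _ _ _ fun j => norm_nonneg _
  have h := hT n (fun k j => b k j ^ (1 / p k - 1 / q k) • x k j)
  have e : ∀ j : ∀ k, Fin (n k),
      ‖T (fun k => b k (j k) ^ (1 / p k - 1 / q k) • x k (j k))‖ =
      ‖T (fun k => x k (j k))‖ * ∏ k, b k (j k) ^ (1 / p k - 1 / q k) := by
    intro j
    rw [T.map_smul_univ, norm_smul, mul_comm, Real.norm_of_nonneg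
      (Finset.prod_nonneg fun k _ => Real.rpow_nonneg (hb0 _ _) _)]
  simp only [e] at h
  have h1 := Real.rpow_le_rpow (Real.rpow_nonneg hA r) hb (one_div_pos.2 hr0).le
  rw [← Real.rpow_mul hA, mul_one_div_cancel hr0.ne', Real.rpow_one] at h1
  refine h1.trans (h.trans (mul_le_mul_of_nonneg_left ?_ hC))
  exact Finset.prod_le_prod (fun k _ => weakNorm_nonneg _ _) fun k _ =>
    weakNorm_weighted (x k) (b k) (p k) (q k) (hp k) (hpq k) (hb0 k) (hb1 k)
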